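/- Let f : ℝⁿ → ℝ be convex with nonempty solution set argmin f. Let t_k = 1/(k+1) and let δ_k > 0 satisfy Σ_{k=0}^∞ √(n t_k δ_k) < ∞, and assume the HJ-Prox integrals are finite at every iterate. Then the exact-integral HJ-Prox proximal point iteration x_{k+1} = prox^{δ_k}_{t_k f}(x_k) converges to a global minimizer of f. -/

import Mathlib

open MeasureTheory Real Filter Topology

/-!
The proximal objective is `1 / t`-strongly convex, so it grows quadratically away from its
minimizer `p`, with two consequences.

* Contracting `z` towards `p` by a factor `r < 1` lowers the potential by at least
  `(1 - r ^ 2) * m / 2 * ‖z - p‖ ^ 2`, while the change of variables costs a factor `r⁻ⁿ`. Letting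
  `r → 1` shows that the Gibbs measure of an `m`-strongly convex potential has second moment at most
  `n / m` about `p`; by Jensen the HJ-Prox point is within `√(n t δ)` of the proximal point.
* The exact proximal step is Fejér monotone with respect to every minimizer `u` and decreases
  `‖x - u‖ ^ 2` by at least `2 t (f p - f u)`. With summable errors, `‖x k - u‖` still converges and
  `∑ t k (f (p k) - f u)` is finite, so `f (p k)` clusters at the minimum because `∑ t k` diverges.
  A cluster point of the bounded sequence `p` is then a minimizer from which the distances of the
  iterates converge to a limit that vanishes along a subsequence.
-/

open Module (finrank)

section StrongConvexity

variable {E : Type*} [NormedAddCommGroup E] [NormedSpace ℝ E] {s : Set E} {m : ℝ} {φ : E → ℝ}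
  {p u : E}

lemma strongConvexOn_const_mul {c : ℝ} (hc : 0 ≤ c) (hφ : StrongConvexOn s m φ) :
    StrongConvexOn s (c * m) fun z => c * φ z := by
  refine ⟨hφ.1, fun y hy z hz a b ha hb hab => ?_⟩
  refine (mul_le_mul_of_nonneg_left (hφ.2 hy hz ha hb hab) hc).trans_eq ?_
  simp only [smul_eq_mul]
  ring

lemma add_sq_norm_sub_le_of_isMinOn (hφ : StrongConvexOn s m φ) (hmin : IsMinOn φ s p)
    (hp : p ∈ s) (hu : u ∈ s) : φ p + m / 2 * ‖u - p‖ ^ 2 ≤ φ u := by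
  have along_segment : ∀ r ∈ Set.Ioo (0 : ℝ) 1, φ p + (1 - r) * (m / 2 * ‖u - p‖ ^ 2) ≤ φ u := by
    rintro r ⟨hr0, hr1⟩
    have hmem : r • u + (1 - r) • p ∈ s := hφ.1 hu hp hr0.le (sub_nonneg.2 hr1.le) (by ring)
    have hstrong := hφ.2 hu hp hr0.le (sub_nonneg.2 hr1.le) (by ring)
    have hle : φ p ≤ φ (r • u + (1 - r) • p) := hmin hmem
    simp only [smul_eq_mul] at hstrong
    refine le_of_mul_le_mul_left ?_ hr0
    linarith
  have hcont : ContinuousWithinAt (fun r : ℝ => φ p + (1 - r) * (m / 2 * ‖u - p‖ ^ 2))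
      (Set.Ioi 0) 0 := by fun_prop
  have hlim := le_of_tendsto hcont
    (eventually_of_mem (Ioo_mem_nhdsGT one_pos) along_segment)
  simpa using hlim

lemma contraction_add_sq_norm_sub_le_of_isMinOn (hφ : StrongConvexOn s m φ) (hmin : IsMinOn φ s p)
    (hp : p ∈ s) (hu : u ∈ s) {r : ℝ} (hr0 : 0 ≤ r) (hr1 : r ≤ 1) :
    φ (r • u + (1 - r) • p) + (1 - r ^ 2) * (m / 2 * ‖u - p‖ ^ 2) ≤ φ u := by
  have hstrong := hφ.2 hu hp hr0 (sub_nonneg.2 hr1) (by ring)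
  have hgrowth := mul_le_mul_of_nonneg_left (add_sq_norm_sub_le_of_isMinOn hφ hmin hp hu)
    (sub_nonneg.2 hr1)
  simp only [smul_eq_mul] at hstrong
  linarith

lemma mul_exp_neg_mul_sq_norm_sub_le (hφ : StrongConvexOn s m φ) (hmin : IsMinOn φ s p)
    (hp : p ∈ s) (hu : u ∈ s) {r : ℝ} (hr0 : 0 ≤ r) (hr1 : r ≤ 1) :
    (1 - r ^ 2) * (m / 2) * (exp (-φ u) * ‖u - p‖ ^ 2) ≤
      exp (-φ (r • u + (1 - r) • p)) - exp (-φ u) := by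
  set gain := (1 - r ^ 2) * (m / 2 * ‖u - p‖ ^ 2) with hgain
  have hdrop := contraction_add_sq_norm_sub_le_of_isMinOn hφ hmin hp hu hr0 hr1
  have hexp : exp (-φ u) * (gain + 1) ≤ exp (-φ (r • u + (1 - r) • p)) := calc
    exp (-φ u) * (gain + 1) ≤ exp (-φ u) * exp gain := by gcongr; exact add_one_le_exp gain
    _ = exp (-φ u + gain) := (exp_add _ _).symm
    _ ≤ exp (-φ (r • u + (1 - r) • p)) := exp_le_exp.2 (by linarith)
  rw [hgain] at hexp
  linarith

end StrongConvexity

section GibbsMeasure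

variable {E : Type*} [NormedAddCommGroup E] [NormedSpace ℝ E] [MeasurableSpace E]

lemma norm_integral_sub_le_sqrt (ν : Measure E) [IsProbabilityMeasure ν] [CompleteSpace E]
    {p : E} (hmean : Integrable (fun z => z) ν) (hmoment : Integrable (fun z => ‖z - p‖ ^ 2) ν) :
    ‖∫ z, z ∂ν - p‖ ≤ √(∫ z, ‖z - p‖ ^ 2 ∂ν) := by
  have hconvex : ConvexOn ℝ Set.univ fun z : E => ‖z‖ ^ 2 :=
    (convexOn_norm convex_univ).pow (fun _ _ => norm_nonneg _) 2
  have hjensen := hconvex.map_integral_le (f := fun z => z - p) (by fun_prop) isClosed_univ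
    (ae_of_all _ fun _ => Set.mem_univ _) (hmean.sub (integrable_const p)) hmoment
  rw [integral_sub hmean (integrable_const p), integral_const, probReal_univ, one_smul] at hjensen
  exact le_sqrt_of_sq_le hjensen

variable [BorelSpace E] [FiniteDimensional ℝ E] (μ : Measure E) [μ.IsAddHaarMeasure]
  {m : ℝ} {V : E → ℝ} {p : E}

lemma integrable_exp_neg_mul_sq_norm {c : ℝ} (hc : 0 < c) :
    Integrable (fun z : E => exp (-c * ‖z‖ ^ 2)) μ := by
  rcases subsingleton_or_nontrivial E with _ | _
  · exact Integrable.of_finite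
  · rw [integrable_fun_norm_addHaar μ (f := fun r => exp (-c * r ^ 2))]
    have hexponent : (-1 : ℝ) < (finrank ℝ E - 1 : ℕ) :=
      neg_one_lt_zero.trans_le (Nat.cast_nonneg _)
    simpa only [smul_eq_mul, rpow_natCast] using
      integrableOn_rpow_mul_exp_neg_mul_sq hc hexponent

lemma integrable_exp_neg_of_strongConvexOn (hm : 0 < m) (hV : StrongConvexOn Set.univ m V)
    (hp : IsMinOn V Set.univ p) : Integrable (fun z => exp (-V z)) μ := by
  have hcont : Continuous V := continuousOn_univ.1
    ((strongConvexOn_zero.1 (hV.mono hm.le)).continuousOn isOpen_univ)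
  have hgauss := ((integrable_exp_neg_mul_sq_norm μ (half_pos hm)).comp_sub_right p).const_mul
    (exp (-V p))
  refine hgauss.mono' (by fun_prop) (ae_of_all _ fun z => ?_)
  rw [norm_of_nonneg (exp_pos _).le, ← exp_add]
  have := add_sq_norm_sub_le_of_isMinOn hV hp (Set.mem_univ p) (Set.mem_univ z)
  exact exp_le_exp.2 (by linarith)

lemma integrable_exp_neg_mul_sq_norm_sub (hm : 0 < m) (hV : StrongConvexOn Set.univ m V)
    (hp : IsMinOn V Set.univ p) : Integrable (fun z => exp (-V z) * ‖z - p‖ ^ 2) μ := by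
  have hexp := integrable_exp_neg_of_strongConvexOn μ hm hV hp
  have hcontracted : Integrable (fun z => exp (-V ((2⁻¹ : ℝ) • z + (1 - 2⁻¹ : ℝ) • p))) μ :=
    (hexp.comp_add_right _).comp_smul (by norm_num)
  have hscaled : Integrable
      (fun z => (1 - (2⁻¹ : ℝ) ^ 2) * (m / 2) * (exp (-V z) * ‖z - p‖ ^ 2)) μ := by
    refine (hcontracted.sub hexp).mono' ?_ (ae_of_all _ fun z => ?_)
    · exact (hexp.1.mul (by fun_prop)).const_mul _
    · rw [norm_of_nonneg (by norm_num; positivity)]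
      exact mul_exp_neg_mul_sq_norm_sub_le hV hp (Set.mem_univ p) (Set.mem_univ z)
        (by norm_num) (by norm_num)
  exact (integrable_const_mul_iff (IsUnit.mk0 _ (by norm_num; exact hm.ne')) _).1 hscaled

lemma integral_comp_smul_add_right {F : Type*} [NormedAddCommGroup F] [NormedSpace ℝ F] (g : E → F)
    (r : ℝ) (b : E) : ∫ z, g (r • z + b) ∂μ = |(r ^ finrank ℝ E)⁻¹| • ∫ z, g z ∂μ := by
  rw [Measure.integral_comp_smul μ (fun z => g (z + b)), integral_add_right_eq_self]

lemma mul_integral_exp_neg_mul_sq_norm_sub_le (hm : 0 < m) (hV : StrongConvexOn Set.univ m V)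
    (hp : IsMinOn V Set.univ p) {r : ℝ} (hr0 : 0 < r) (hr1 : r ≤ 1) :
    (1 - r ^ 2) * (m / 2) * ∫ z, exp (-V z) * ‖z - p‖ ^ 2 ∂μ ≤
      (r ^ finrank ℝ E)⁻¹ * ∫ z, exp (-V z) ∂μ - ∫ z, exp (-V z) ∂μ := by
  have hexp := integrable_exp_neg_of_strongConvexOn μ hm hV hp
  have hcontracted : Integrable (fun z => exp (-V (r • z + (1 - r) • p))) μ :=
    (hexp.comp_add_right _).comp_smul hr0.ne'
  have hchange : ∫ z, exp (-V (r • z + (1 - r) • p)) ∂μ =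
      (r ^ finrank ℝ E)⁻¹ * ∫ z, exp (-V z) ∂μ := by
    rw [integral_comp_smul_add_right μ (fun z => exp (-V z)), abs_of_pos (by positivity),
      smul_eq_mul]
  rw [← hchange, ← integral_sub hcontracted hexp, ← integral_const_mul]
  exact integral_mono ((integrable_exp_neg_mul_sq_norm_sub μ hm hV hp).const_mul _)
    (hcontracted.sub hexp) fun z => mul_exp_neg_mul_sq_norm_sub_le hV hp (Set.mem_univ p)
      (Set.mem_univ z) hr0.le hr1

lemma integral_exp_neg_mul_sq_norm_sub_le (hm : 0 < m) (hV : StrongConvexOn Set.univ m V)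
    (hp : IsMinOn V Set.univ p) :
    m * ∫ z, exp (-V z) * ‖z - p‖ ^ 2 ∂μ ≤ finrank ℝ E * ∫ z, exp (-V z) ∂μ := by
  set n := finrank ℝ E
  set Z := ∫ z, exp (-V z) ∂μ
  set M := ∫ z, exp (-V z) * ‖z - p‖ ^ 2 ∂μ
  have hcontraction : ∀ r ∈ Set.Ioo (0 : ℝ) 1, r ^ n * (1 + r) * (m / 2) * M ≤ n * Z := by
    rintro r ⟨hr0, hr1⟩
    have hbernoulli : 1 - r ^ n ≤ n * (1 - r) := by
      have := one_add_mul_le_pow (a := r - 1) (by linarith) n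
      rw [add_sub_cancel] at this
      linarith
    refine le_of_mul_le_mul_left ?_ (sub_pos.2 hr1)
    calc (1 - r) * (r ^ n * (1 + r) * (m / 2) * M)
        = r ^ n * ((1 - r ^ 2) * (m / 2) * M) := by ring
      _ ≤ r ^ n * ((r ^ n)⁻¹ * Z - Z) := by
          gcongr
          exact mul_integral_exp_neg_mul_sq_norm_sub_le μ hm hV hp hr0 hr1.le
      _ = (1 - r ^ n) * Z := by field_simp
      _ ≤ n * (1 - r) * Z :=
          mul_le_mul_of_nonneg_right hbernoulli (integral_nonneg fun z => (exp_pos _).le)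
      _ = (1 - r) * (n * Z) := by ring
  have hcont : ContinuousWithinAt (fun r : ℝ => r ^ n * (1 + r) * (m / 2) * M) (Set.Iio 1) 1 := by
    fun_prop
  have hlim := le_of_tendsto hcont (eventually_of_mem (Ioo_mem_nhdsLT one_pos) hcontraction)
  norm_num at hlim
  linarith

theorem norm_integral_tilted_sub_le (hm : 0 < m) (hV : StrongConvexOn Set.univ m V)
    (hp : IsMinOn V Set.univ p) :
    ‖∫ z, z ∂(μ.tilted fun z => -V z) - p‖ ≤ √(finrank ℝ E / m) := by
  have hexp := integrable_exp_neg_of_strongConvexOn μ hm hV hp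
  have := isProbabilityMeasure_tilted hexp
  have hmoment : Integrable (fun z => ‖z - p‖ ^ 2) (μ.tilted fun z => -V z) :=
    (integrable_tilted_iff hexp _).2 (integrable_exp_neg_mul_sq_norm_sub μ hm hV hp)
  have hmean : Integrable (fun z => z) (μ.tilted fun z => -V z) := by
    have hLp : MemLp (fun z => z - p) 2 (μ.tilted fun z => -V z) :=
      (memLp_two_iff_integrable_sq_norm (by fun_prop)).2 hmoment
    exact ((hLp.integrable one_le_two).add (integrable_const p)).congr
      (ae_of_all _ fun z => sub_add_cancel z p)
  refine (norm_integral_sub_le_sqrt _ hmean hmoment).trans (sqrt_le_sqrt ?_)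
  rw [integral_tilted, le_div_iff₀' hm]
  simp_rw [smul_eq_mul, div_mul_eq_mul_div]
  rw [integral_div, ← mul_div_assoc, div_le_iff₀ (integral_exp_pos hexp)]
  exact integral_exp_neg_mul_sq_norm_sub_le μ hm hV hp

end GibbsMeasure

section Prox

variable {E : Type*} [NormedAddCommGroup E]

/-- The proximal objective of `f` at `x` with step size `t`; its minimizer is the proximal point
`prox_{tf}(x)`. -/
noncomputable def proxObjective (f : E → ℝ) (t : ℝ) (x z : E) : ℝ := f z + ‖z - x‖ ^ 2 / (2 * t)

lemma exists_isMinOn_proxObjective [ProperSpace E] {f : E → ℝ} (hf : Continuous f)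
    (hbdd : BddBelow (Set.range f)) {t : ℝ} (ht : 0 < t) (x : E) :
    ∃ p, IsMinOn (proxObjective f t x) Set.univ p := by
  obtain ⟨c, hc⟩ := hbdd
  have hcont : Continuous (proxObjective f t x) := by
    unfold proxObjective
    fun_prop
  have hcoercive : Tendsto (proxObjective f t x) (cocompact E) atTop := by
    refine tendsto_atTop_add_left_of_le _ c (fun z => hc ⟨z, rfl⟩) ?_
    refine Tendsto.atTop_div_const (by positivity) ((tendsto_pow_atTop two_ne_zero).comp ?_)
    simpa only [dist_eq_norm] using tendsto_dist_right_cocompact_atTop x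
  obtain ⟨p, hp⟩ := hcont.exists_forall_le hcoercive
  exact ⟨p, fun z _ => hp z⟩

variable [InnerProductSpace ℝ E] {f : E → ℝ} {t : ℝ} {x p : E}

lemma strongConvexOn_proxObjective (hf : ConvexOn ℝ Set.univ f) (t : ℝ) (x : E) :
    StrongConvexOn Set.univ (1 / t) (proxObjective f t x) := by
  rw [strongConvexOn_iff_convex]
  have hlin : ConvexOn ℝ Set.univ fun z => (-(1 / t) • innerSL ℝ x) z :=
    LinearMap.convexOn (-(1 / t) • innerSL ℝ x).toLinearMap convex_univ
  refine ((hf.add hlin).add_const (‖x‖ ^ 2 / (2 * t))).congr fun z _ => ?_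
  simp only [proxObjective, Pi.add_apply, _root_.smul_apply, innerSL_apply_apply, smul_eq_mul,
    norm_sub_sq_real, real_inner_comm x z]
  ring

lemma sq_norm_sub_add_le_of_isMinOn_proxObjective (hf : ConvexOn ℝ Set.univ f) (ht : 0 < t)
    (hp : IsMinOn (proxObjective f t x) Set.univ p) (u : E) :
    ‖p - u‖ ^ 2 + 2 * t * (f p - f u) ≤ ‖x - u‖ ^ 2 := by
  have hgrowth := add_sq_norm_sub_le_of_isMinOn (strongConvexOn_proxObjective hf t x) hp
    (Set.mem_univ p) (Set.mem_univ u)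
  simp only [proxObjective] at hgrowth
  field_simp at hgrowth
  rw [norm_sub_rev p u, norm_sub_rev x u]
  linarith [sq_nonneg ‖p - x‖]

variable [FiniteDimensional ℝ E] [MeasurableSpace E] [BorelSpace E]

/-- The HJ-Prox approximation `prox^δ_{tf}(x)` of the proximal point: the mean of the Gibbs measure
of the proximal objective at temperature `δ`. -/
noncomputable def hjProx (f : E → ℝ) (t δ : ℝ) (x : E) : E :=
  (∫ z, exp (-proxObjective f t x z / δ))⁻¹ • ∫ z, exp (-proxObjective f t x z / δ) • z

lemma hjProx_eq_integral_tilted (f : E → ℝ) (t δ : ℝ) (x : E) :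
    hjProx f t δ x = ∫ z, z ∂(volume.tilted fun z => -proxObjective f t x z / δ) := by
  rw [integral_tilted, hjProx, ← integral_smul]
  simp_rw [smul_smul, div_eq_inv_mul]

theorem norm_hjProx_sub_le (hf : ConvexOn ℝ Set.univ f) (ht : 0 < t) {δ : ℝ} (hδ : 0 < δ)
    (hp : IsMinOn (proxObjective f t x) Set.univ p) :
    ‖hjProx f t δ x - p‖ ≤ √(finrank ℝ E * t * δ) := by
  have hstrong := strongConvexOn_const_mul (inv_pos.2 hδ).le (strongConvexOn_proxObjective hf t x)
  have hmin : IsMinOn (fun z => δ⁻¹ * proxObjective f t x z) Set.univ p := fun z hz =>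
    mul_le_mul_of_nonneg_left (hp hz) (inv_pos.2 hδ).le
  convert norm_integral_tilted_sub_le volume (by positivity) hstrong hmin using 3
  · simp only [hjProx_eq_integral_tilted, div_eq_inv_mul, mul_neg]
  · field_simp

end Prox

section QuasiFejer

variable {a b ε : ℕ → ℝ}

lemma summable_of_succ_add_le_add (ha : ∀ k, 0 ≤ a k) (hb : ∀ k, 0 ≤ b k) (hε : ∀ k, 0 ≤ ε k)
    (hsum : Summable ε) (h : ∀ k, a (k + 1) + b k ≤ a k + ε k) : Summable b := by
  refine summable_of_sum_range_le (c := a 0 + ∑' k, ε k) hb fun N => ?_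
  have htelescope : ∑ k ∈ Finset.range N, b k ≤ ∑ k ∈ Finset.range N, (a k - a (k + 1) + ε k) :=
    Finset.sum_le_sum fun k _ => by linarith [h k]
  rw [Finset.sum_add_distrib, Finset.sum_range_sub' a] at htelescope
  linarith [ha N, hsum.sum_le_tsum (Finset.range N) fun k _ => hε k]

lemma exists_tendsto_of_succ_le_add (ha : ∀ k, 0 ≤ a k) (hε : ∀ k, 0 ≤ ε k) (hsum : Summable ε)
    (h : ∀ k, a (k + 1) ≤ a k + ε k) : ∃ L, Tendsto a atTop (𝓝 L) := by
  have hanti : Antitone fun k => a k - ∑ i ∈ Finset.range k, ε i :=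
    antitone_nat_of_succ_le fun k => by
      rw [Finset.sum_range_succ]
      linarith [h k]
  have hbdd : BddBelow (Set.range fun k => a k - ∑ i ∈ Finset.range k, ε i) := by
    refine ⟨-∑' i, ε i, ?_⟩
    rintro _ ⟨k, rfl⟩
    linarith [ha k, hsum.sum_le_tsum (Finset.range k) fun i _ => hε i]
  exact ⟨_, by simpa using (tendsto_atTop_ciInf hanti hbdd).add hsum.hasSum.tendsto_sum_nat⟩

lemma mapClusterPt_zero_of_summable_mul (ha : ∀ k, 0 ≤ a k) (hdiv : ¬ Summable a)
    (hb : ∀ k, 0 ≤ b k) (hsum : Summable fun k => a k * b k) : MapClusterPt 0 atTop b := by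
  rw [Metric.nhds_basis_ball.mapClusterPt_iff_frequently]
  intro η hη hfar
  obtain ⟨N, hN⟩ := eventually_atTop.1 hfar
  have hge : ∀ k, η ≤ b (k + N) := fun k => by
    simpa [abs_of_nonneg (hb _)] using hN (k + N) (Nat.le_add_left N k)
  have htail : Summable fun k => a (k + N) * η :=
    Summable.of_nonneg_of_le (fun k => mul_nonneg (ha _) hη.le)
      (fun k => mul_le_mul_of_nonneg_left (hge k) (ha _)) ((summable_nat_add_iff N).2 hsum)
  exact hdiv ((summable_nat_add_iff N).1 ((summable_mul_right_iff hη.ne').1 htail))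

end QuasiFejer

lemma exists_mapClusterPt_of_mapClusterPt_comp {X Y ι : Type*} [TopologicalSpace X]
    [TopologicalSpace Y] [T2Space Y] {K : Set X} (hK : IsCompact K) {f : X → Y} (hf : Continuous f)
    {l : Filter ι} {p : ι → X} (hp : ∀ i, p i ∈ K) {c : Y} (hc : MapClusterPt c l (f ∘ p)) :
    ∃ y, f y = c ∧ MapClusterPt y l p := by
  obtain ⟨U, hUl, hvalues⟩ := mapClusterPt_iff_ultrafilter.1 hc
  obtain ⟨y, -, hpoints⟩ := hK.ultrafilter_le_nhds (U.map p)
    (tendsto_principal.2 (Eventually.of_forall hp))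
  exact ⟨y, tendsto_nhds_unique ((hf.tendsto y).comp hpoints) hvalues,
    mapClusterPt_iff_ultrafilter.2 ⟨U, hUl, hpoints⟩⟩

section InexactFejer

variable {E : Type*} [NormedAddCommGroup E] {f : E → ℝ} {u : E}

lemma norm_sub_le_of_fejer {t : ℝ} {x p : E} (ht : 0 ≤ t) (hu : ∀ z, f u ≤ f z)
    (hfejer : ‖p - u‖ ^ 2 + 2 * t * (f p - f u) ≤ ‖x - u‖ ^ 2) : ‖p - u‖ ≤ ‖x - u‖ := by
  have hgap : 0 ≤ 2 * t * (f p - f u) := mul_nonneg (by linarith) (sub_nonneg.2 (hu p))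
  exact le_of_sq_le_sq (by linarith) (norm_nonneg _)

variable {t ε : ℕ → ℝ} {x p : ℕ → E}

lemma exists_tendsto_norm_sub_of_fejer (ht : ∀ k, 0 ≤ t k) (hu : ∀ z, f u ≤ f z)
    (hfejer : ∀ k, ‖p k - u‖ ^ 2 + 2 * t k * (f (p k) - f u) ≤ ‖x k - u‖ ^ 2)
    (herr : ∀ k, ‖x (k + 1) - p k‖ ≤ ε k) (hε : Summable ε) :
    ∃ L, Tendsto (fun k => ‖x k - u‖) atTop (𝓝 L) ∧ Tendsto (fun k => ‖p k - u‖) atTop (𝓝 L) := by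
  have hexact : ∀ k, ‖p k - u‖ ≤ ‖x k - u‖ := fun k => norm_sub_le_of_fejer (ht k) hu (hfejer k)
  have hinexact : ∀ k, ‖x (k + 1) - u‖ ≤ ε k + ‖p k - u‖ := fun k =>
    (norm_sub_le_norm_sub_add_norm_sub _ (p k) _).trans (by gcongr; exact herr k)
  obtain ⟨L, hL⟩ := exists_tendsto_of_succ_le_add (fun k => norm_nonneg (x k - u))
    (fun k => (norm_nonneg _).trans (herr k)) hε fun k => by linarith [hexact k, hinexact k]
  have hlower : Tendsto (fun k => ‖x (k + 1) - u‖ - ε k) atTop (𝓝 L) := by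
    simpa only [sub_zero] using ((tendsto_add_atTop_iff_nat 1).2 hL).sub hε.tendsto_atTop_zero
  exact ⟨L, hL, tendsto_of_tendsto_of_tendsto_of_le_of_le hlower hL
    (fun k => by simpa only [sub_le_iff_le_add'] using hinexact k) hexact⟩

lemma summable_mul_sub_of_fejer (ht : ∀ k, 0 ≤ t k) (hu : ∀ z, f u ≤ f z)
    (hfejer : ∀ k, ‖p k - u‖ ^ 2 + 2 * t k * (f (p k) - f u) ≤ ‖x k - u‖ ^ 2)
    (herr : ∀ k, ‖x (k + 1) - p k‖ ≤ ε k) (hε : Summable ε) :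
    Summable fun k => t k * (f (p k) - f u) := by
  have hε0 : ∀ k, 0 ≤ ε k := fun k => (norm_nonneg _).trans (herr k)
  obtain ⟨L, hL, -⟩ := exists_tendsto_norm_sub_of_fejer ht hu hfejer herr hε
  obtain ⟨M, hM⟩ := hL.bddAbove_range
  have hxM : ∀ k, ‖x k - u‖ ≤ M := fun k => hM ⟨k, rfl⟩
  have hM0 : 0 ≤ M := (norm_nonneg _).trans (hxM 0)
  have hdescent : ∀ k, ‖x (k + 1) - u‖ ^ 2 + 2 * t k * (f (p k) - f u) ≤
      ‖x k - u‖ ^ 2 + 2 * M * ε k := fun k => by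
    have hpM : ‖p k - u‖ ≤ M := (norm_sub_le_of_fejer (ht k) hu (hfejer k)).trans (hxM k)
    have herror : ‖x (k + 1) - u‖ ^ 2 - ‖p k - u‖ ^ 2 ≤ 2 * M * ε k := calc
      _ = (‖x (k + 1) - u‖ + ‖p k - u‖) * (‖x (k + 1) - u‖ - ‖p k - u‖) := by ring
      _ ≤ (‖x (k + 1) - u‖ + ‖p k - u‖) * ε k := by
          gcongr
          exact (norm_sub_norm_le _ _).trans
            (by simpa only [sub_sub_sub_cancel_right] using herr k)
      _ ≤ 2 * M * ε k := mul_le_mul_of_nonneg_right (by linarith [hxM (k + 1)]) (hε0 k)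
    linarith [hfejer k]
  have hsum := summable_of_succ_add_le_add (fun k => sq_nonneg ‖x k - u‖)
    (fun k => mul_nonneg (mul_nonneg two_pos.le (ht k)) (sub_nonneg.2 (hu (p k))))
    (fun k => mul_nonneg (by positivity) (hε0 k)) (hε.mul_left (2 * M)) hdescent
  simp_rw [mul_assoc] at hsum
  exact (summable_mul_left_iff two_ne_zero).1 hsum

theorem exists_tendsto_minimizer_of_fejer [ProperSpace E] (hf : Continuous f)
    (hu : ∀ z, f u ≤ f z) (ht : ∀ k, 0 ≤ t k) (hdiv : ¬ Summable t)
    (hfejer : ∀ k v, ‖p k - v‖ ^ 2 + 2 * t k * (f (p k) - f v) ≤ ‖x k - v‖ ^ 2)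
    (herr : ∀ k, ‖x (k + 1) - p k‖ ≤ ε k) (hε : Summable ε) :
    ∃ y, (∀ z, f y ≤ f z) ∧ Tendsto x atTop (𝓝 y) := by
  have hgap : MapClusterPt 0 atTop fun k => f (p k) - f u :=
    mapClusterPt_zero_of_summable_mul ht hdiv (fun k => sub_nonneg.2 (hu (p k)))
      (summable_mul_sub_of_fejer ht hu (fun k => hfejer k u) herr hε)
  obtain ⟨_, -, hpu⟩ := exists_tendsto_norm_sub_of_fejer ht hu (fun k => hfejer k u) herr hε
  obtain ⟨M, hM⟩ := hpu.bddAbove_range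
  obtain ⟨y, hyu, hy⟩ := exists_mapClusterPt_of_mapClusterPt_comp
    (isCompact_closedBall u M) (f := fun z => f z - f u) (by fun_prop)
    (fun k => mem_closedBall_iff_norm.2 (hM ⟨k, rfl⟩)) hgap
  have hymin : ∀ z, f y ≤ f z := fun z => (sub_eq_zero.1 hyu).trans_le (hu z)
  obtain ⟨L, hx, hp⟩ := exists_tendsto_norm_sub_of_fejer ht hymin (fun k => hfejer k y) herr hε
  obtain ⟨U, hU, hUy⟩ := mapClusterPt_iff_ultrafilter.1 hy
  obtain rfl : L = 0 := tendsto_nhds_unique (hp.mono_left hU)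
    (tendsto_iff_norm_sub_tendsto_zero.1 hUy)
  exact ⟨y, hymin, tendsto_iff_norm_sub_tendsto_zero.2 hx⟩

end InexactFejer

theorem hj_ppm_convergence_general {E : Type*} [NormedAddCommGroup E] [InnerProductSpace ℝ E]
    [FiniteDimensional ℝ E] [MeasurableSpace E] [BorelSpace E] {f : E → ℝ}
    (hf : ConvexOn ℝ Set.univ f) {u : E} (hu : ∀ z, f u ≤ f z) {t δ : ℕ → ℝ} (ht : ∀ k, 0 < t k)
    (hdiv : ¬ Summable t) (hδ : ∀ k, 0 < δ k)
    (hsum : Summable fun k => √(finrank ℝ E * t k * δ k)) {x : ℕ → E}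
    (hx : ∀ k, x (k + 1) = hjProx f (t k) (δ k) (x k)) :
    ∃ y, (∀ z, f y ≤ f z) ∧ Tendsto x atTop (𝓝 y) := by
  have hcont : Continuous f := continuousOn_univ.1 (hf.continuousOn isOpen_univ)
  have hbdd : BddBelow (Set.range f) := ⟨f u, Set.forall_mem_range.2 hu⟩
  choose p hp using fun k => exists_isMinOn_proxObjective hcont hbdd (ht k) (x k)
  exact exists_tendsto_minimizer_of_fejer hcont hu (fun k => (ht k).le) hdiv
    (fun k => sq_norm_sub_add_le_of_isMinOn_proxObjective hf (ht k) (hp k))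
    (fun k => hx k ▸ norm_hjProx_sub_le hf (ht k) (hδ k) (hp k)) hsum

lemma not_summable_one_div_natCast_add_one : ¬ Summable fun k : ℕ => 1 / ((k : ℝ) + 1) := by
  simpa using (summable_nat_add_iff (f := fun k : ℕ => 1 / (k : ℝ)) 1).not.2
    not_summable_one_div_natCast

/-- **Convergence of the exact-integral HJ-Prox proximal point method.** With step
sizes `t_k = 1/(k+1)` and smoothing parameters `δ_k > 0` satisfying
`Σ √(n t_k δ_k) < ∞`, the iteration `x_{k+1} = prox^{δ_k}_{t_k f}(x_k)` (with
exactly evaluated integrals) converges to a global minimizer of `f`. -/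
theorem hj_ppm_convergence (n : ℕ) (f : EuclideanSpace ℝ (Fin n) → ℝ)
    (hf : ConvexOn ℝ Set.univ f)
    (ustar : EuclideanSpace ℝ (Fin n)) (hustar : ∀ z, f ustar ≤ f z)
    (t δ : ℕ → ℝ) (htdef : ∀ k : ℕ, t k = 1 / ((k : ℝ) + 1))
    (hδpos : ∀ k, 0 < δ k)
    (hsum : Summable fun k => Real.sqrt (n * t k * δ k))
    (x : ℕ → EuclideanSpace ℝ (Fin n))
    (hint1 : ∀ k : ℕ, Integrable (fun z : EuclideanSpace ℝ (Fin n) =>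
      Real.exp (-(f z + ‖z - x k‖ ^ 2 / (2 * t k)) / δ k)))
    (hint2 : ∀ k : ℕ, Integrable (fun z : EuclideanSpace ℝ (Fin n) =>
      Real.exp (-(f z + ‖z - x k‖ ^ 2 / (2 * t k)) / δ k) • z))
    (hx : ∀ k : ℕ, x (k + 1) =
      (∫ z : EuclideanSpace ℝ (Fin n),
          Real.exp (-(f z + ‖z - x k‖ ^ 2 / (2 * t k)) / δ k))⁻¹ •
        ∫ z : EuclideanSpace ℝ (Fin n),
          Real.exp (-(f z + ‖z - x k‖ ^ 2 / (2 * t k)) / δ k) • z) :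
    ∃ xstar : EuclideanSpace ℝ (Fin n),
      (∀ z, f xstar ≤ f z) ∧ Tendsto x atTop (𝓝 xstar) := by
  refine hj_ppm_convergence_general hf hustar (fun k => by rw [htdef]; positivity)
    (funext htdef ▸ not_summable_one_div_natCast_add_one) hδpos ?_ hx
  simpa only [finrank_euclideanSpace_fin] using hsum
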